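/- There exists a constant C = C(n) such that for every 1 ≤ p ≤ ∞, every f ∈ W^{1,p}(ℝⁿ), every α ∈ (0,∞), and all distinct points x, y ∈ ℝⁿ with M|∇f|(x) ≤ α and M|∇f|(y) ≤ α, setting r := |x − y|, one has |f_{B(x,r)} − f_{B(y,r)}| ≤ C r α, where f_{B(z,r)} := ⨍_{B(z,r)} f. -/

import Mathlib

open MeasureTheory Filter Metric Set
open scoped ENNReal NNReal Topology

noncomputable section

abbrev Euc (n : ℕ) := EuclideanSpace ℝ (Fin n)

/-- Degree of a multi-index. -/
def mdeg {n : ℕ} (α : Fin n → ℕ) : ℕ := ∑ i, α i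

/-- Iterated partial derivative along a list of coordinate directions. -/
def listDeriv {n : ℕ} : List (Fin n) → (Euc n → ℝ) → (Euc n → ℝ)
  | [], η => η
  | i :: l, η => fun x => fderiv ℝ (listDeriv l η) x (EuclideanSpace.single i 1)

/-- The partial derivative `D^α η` associated to a multi-index `α`. -/
def mderiv {n : ℕ} (α : Fin n → ℕ) (η : Euc n → ℝ) : Euc n → ℝ :=
  listDeriv ((List.finRange n).flatMap fun i => List.replicate (α i) i) η

/-- `g` is the weak derivative `D^α f` on `ℝⁿ`. -/
def IsWeakDeriv {n : ℕ} (α : Fin n → ℕ) (f g : Euc n → ℝ) : Prop :=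
  ∀ η : Euc n → ℝ, ContDiff ℝ (⊤ : ℕ∞) η → HasCompactSupport η →
    ∫ x, f x * mderiv α η x = (-1 : ℝ) ^ mdeg α * ∫ x, g x * η x

/-- `g` is the weak derivative `D^α f` on an open set `U`. -/
def IsWeakDerivOn {n : ℕ} (U : Set (Euc n)) (α : Fin n → ℕ) (f g : Euc n → ℝ) : Prop :=
  ∀ η : Euc n → ℝ, ContDiff ℝ (⊤ : ℕ∞) η → HasCompactSupport η → tsupport η ⊆ U →
    ∫ x in U, f x * mderiv α η x = (-1 : ℝ) ^ mdeg α * ∫ x in U, g x * η x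

/-- Membership in the Sobolev space `W^{k,p}(U)`. -/
def MemSobolevOn {n : ℕ} (k : ℕ) (p : ℝ) (U : Set (Euc n)) (f : Euc n → ℝ) : Prop :=
  MemLp f (ENNReal.ofReal p) (volume.restrict U) ∧
  ∀ α : Fin n → ℕ, mdeg α ≤ k → ∃ g : Euc n → ℝ,
    MemLp g (ENNReal.ofReal p) (volume.restrict U) ∧ IsWeakDerivOn U α f g

/-- Membership in the local Sobolev space `W^{k,p}_loc(Ω)`. -/
def MemSobolevLoc {n : ℕ} (k : ℕ) (p : ℝ) (Ω : Set (Euc n)) (f : Euc n → ℝ) : Prop :=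
  ∀ U : Set (Euc n), IsOpen U → Bornology.IsBounded U → closure U ⊆ Ω →
    MemSobolevOn k p U f

/-- The normalizing constant `γ(a)` of the Riesz kernel. -/
def rieszGamma (n : ℕ) (a : ℝ) : ℝ :=
  Real.pi ^ ((n : ℝ) / 2) * (2 : ℝ) ^ a * Real.Gamma (a / 2) / Real.Gamma (((n : ℝ) - a) / 2)

/-- The Riesz potential `I_a * g`, valued in `ℝ≥0∞`. -/
def rieszPot {n : ℕ} (a : ℝ) (g : Euc n → ℝ) (x : Euc n) : ℝ≥0∞ :=
  (ENNReal.ofReal (rieszGamma n a))⁻¹ *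
    ∫⁻ y, ENNReal.ofReal (g y) * ENNReal.ofReal (‖x - y‖ ^ (a - (n : ℝ)))

/-- The Riesz capacity `R_{a,p}`. -/
def rieszCap {n : ℕ} (a p : ℝ) (S : Set (Euc n)) : ℝ≥0∞ :=
  ⨅ (g : Euc n → ℝ) (_ : MemLp g (ENNReal.ofReal p) volume ∧ (∀ x, 0 ≤ g x) ∧
      ∀ x ∈ S, 1 ≤ rieszPot a g x),
    ∫⁻ y, ENNReal.ofReal (g y) ^ p

/-- The precise representative of a (vector-valued) locally integrable function. -/
def preciseRepV {n : ℕ} {F : Type*} [NormedAddCommGroup F] [NormedSpace ℝ F]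
    (f : Euc n → F) (x : Euc n) : F :=
  letI := Classical.propDecidable
  if h : ∃ L : F, Tendsto (fun ε : ℝ => ⨍ y in ball x ε, f y) (𝓝[>] (0:ℝ)) (𝓝 L)
  then h.choose else 0

/-- The precise representative of a real-valued locally integrable function. -/
def preciseRep {n : ℕ} (f : Euc n → ℝ) (x : Euc n) : ℝ := preciseRepV f x

/-- The Hardy–Littlewood maximal function (of an `ℝ≥0∞`-valued integrand). -/
def maxFn {n : ℕ} (g : Euc n → ℝ≥0∞) (x : Euc n) : ℝ≥0∞ :=
  ⨆ (r : ℝ) (_ : 0 < r), (volume (ball x r))⁻¹ * ∫⁻ y in ball x r, g y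

/-- `x` is a density point of `S`. -/
def DensityPt {n : ℕ} (S : Set (Euc n)) (x : Euc n) : Prop :=
  Tendsto (fun r : ℝ => volume (S ∩ ball x r) / volume (ball x r)) (𝓝[>] (0:ℝ)) (𝓝 1)

/-- `L` is the approximate differential of `φ` at `x₀`, relative to the domain `A`. -/
def HasApproxDerivAt {n : ℕ} (A : Set (Euc n)) (φ : Euc n → Euc n)
    (L : Euc n →L[ℝ] Euc n) (x₀ : Euc n) : Prop :=
  DensityPt A x₀ ∧ ∀ ε : ℝ, 0 < ε →
    DensityPt {x | x ∈ A ∧ ‖φ x - φ x₀ - L (x - x₀)‖ ≤ ε * ‖x - x₀‖} x₀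

end

/-- `g` is the weak gradient of `f`. -/
def IsWeakGradient {n : ℕ} (f : Euc n → ℝ) (g : Euc n → Euc n) : Prop :=
  ∀ i : Fin n, IsWeakDeriv (Pi.single i 1) f
    (fun x => (inner ℝ (g x) (EuclideanSpace.single i 1) : ℝ))

theorem aux_flatMap {ι : Type*} [DecidableEq ι] (i : ι) (l : List ι) (hl : l.Nodup) :
    (l.flatMap fun j => List.replicate ((Pi.single i 1 : ι → ℕ) j) j) =
      if i ∈ l then [i] else [] := by
  induction l with
  | nil => simp
  | cons a l ih =>
    rw [List.nodup_cons] at hl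
    rw [List.flatMap_cons, ih hl.2]
    by_cases h : i = a
    · subst h
      simp [hl.1]
    · have h' : a ≠ i := fun e => h e.symm
      simp [h, h']

theorem aux_mderiv {n : ℕ} (i : Fin n) (η : Euc n → ℝ) :
    mderiv (Pi.single i 1) η = fun x => fderiv ℝ η x (EuclideanSpace.single i 1) := by
  unfold mderiv
  rw [aux_flatMap i _ (List.nodup_finRange n)]
  simp [listDeriv]

theorem aux_weak {n : ℕ} {f : Euc n → ℝ} {g : Euc n → Euc n}
    (hf : LocallyIntegrable f volume) (hg : LocallyIntegrable g volume)
    (hw : IsWeakGradient f g) (η : Euc n → ℝ) (hη : ContDiff ℝ (⊤ : ℕ∞) η)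
    (hc : HasCompactSupport η) (h : Euc n) :
    ∫ x, f x * fderiv ℝ η x h = - ∫ x, η x * inner ℝ (g x) h := by
  have hh : h = ∑ i, h i • (EuclideanSpace.single i (1:ℝ) : Euc n) := by
    have := (EuclideanSpace.basisFun (Fin n) ℝ).sum_repr h
    simpa using this.symm
  have hi : ∀ i : Fin n, ∫ x, f x * fderiv ℝ η x (EuclideanSpace.single i 1)
      = - ∫ x, η x * inner ℝ (g x) (EuclideanSpace.single i (1:ℝ) : Euc n) := by
    intro i
    have := hw i η hη hc
    rw [aux_mderiv] at this
    simp only [mdeg, Finset.sum_pi_single', Finset.mem_univ, if_true, pow_one] at this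
    rw [this, neg_one_mul]
    simp_rw [mul_comm]
  have hcf : Continuous (fderiv ℝ η) := hη.continuous_fderiv (by simp)
  have I1 : ∀ v : Euc n, Integrable (fun x => f x * fderiv ℝ η x v) volume := by
    intro v
    have h1 : Continuous (fun x => fderiv ℝ η x v) := by fun_prop
    exact hf.integrable_smul_right_of_hasCompactSupport h1 (hc.fderiv_apply ℝ v)
  have I2 : ∀ v : Euc n, Integrable (fun x => η x * inner ℝ (g x) v) volume := by
    intro v
    have := (hg.integrable_smul_left_of_hasCompactSupport hη.continuous hc).inner_const (𝕜 := ℝ) v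
    refine this.congr (Eventually.of_forall fun x => ?_)
    simp [inner_smul_left]
  have e1 : ∀ x, f x * fderiv ℝ η x h
      = ∑ i, h i * (f x * fderiv ℝ η x (EuclideanSpace.single i 1)) := by
    intro x
    conv_lhs => rw [hh]
    rw [map_sum, Finset.mul_sum]
    refine Finset.sum_congr rfl fun i _ => ?_
    rw [map_smul, smul_eq_mul]; ring
  have e2 : ∀ x, η x * inner ℝ (g x) h
      = ∑ i, h i * (η x * inner ℝ (g x) (EuclideanSpace.single i (1:ℝ) : Euc n)) := by
    intro x
    conv_lhs => rw [hh]
    rw [inner_sum, Finset.mul_sum]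
    refine Finset.sum_congr rfl fun i _ => ?_
    rw [inner_smul_right]; ring
  simp_rw [e1, e2]
  rw [integral_finsetSum _ fun i _ => (I1 _).const_mul _,
    integral_finsetSum _ fun i _ => (I2 _).const_mul _, ← Finset.sum_neg_distrib]
  refine Finset.sum_congr rfl fun i _ => ?_
  rw [integral_const_mul, integral_const_mul, hi]; ring

theorem aux_deriv {n : ℕ} {f : Euc n → ℝ} {g : Euc n → Euc n}
    (hf : LocallyIntegrable f volume) (hg : LocallyIntegrable g volume)
    (hw : IsWeakGradient f g) (η : Euc n → ℝ) (hη : ContDiff ℝ (⊤ : ℕ∞) η)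
    (hc : HasCompactSupport η) (x h : Euc n) (t : ℝ) :
    HasDerivAt (fun t : ℝ => ∫ z, f z * η (z - (x + t • h)))
      (∫ z, η (z - (x + t • h)) * inner ℝ (g z) h) t := by
  have hcf : Continuous (fderiv ℝ η) := hη.continuous_fderiv (by simp)
  obtain ⟨C, hC⟩ := (hc.fderiv ℝ).exists_bound_of_continuous hcf
  have hC0 : 0 ≤ C := (norm_nonneg _).trans (hC 0)
  obtain ⟨R, hR⟩ := (hc.isCompact).isBounded.subset_closedBall (0 : Euc n)
  have trans_c : ∀ s : ℝ, HasCompactSupport (fun z => η (z - (x + s • h))) := fun s =>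
    hc.comp_homeomorph (Homeomorph.subRight (x + s • h))
  have trans_s : ∀ s : ℝ, ContDiff ℝ (⊤ : ℕ∞) (fun z => η (z - (x + s • h))) := fun s =>
    hη.comp (contDiff_id.sub contDiff_const)
  have trans_d : ∀ (s : ℝ) (z : Euc n), fderiv ℝ (fun z => η (z - (x + s • h))) z
      = fderiv ℝ η (z - (x + s • h)) := fun s z => by
    simp_rw [sub_eq_add_neg]
    rw [fderiv_comp_add_right]
  have I1 : ∀ s : ℝ, Integrable (fun z => f z * η (z - (x + s • h))) volume := fun s =>
    hf.integrable_smul_right_of_hasCompactSupport (trans_s s).continuous (trans_c s)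
  have I2 : ∀ s : ℝ, Integrable (fun z => f z * -(fderiv ℝ η (z - (x + s • h)) h)) volume := by
    intro s
    have h1 : Continuous (fun z => -(fderiv ℝ η (z - (x + s • h)) h)) := by fun_prop
    refine hf.integrable_smul_right_of_hasCompactSupport h1 ?_
    exact (((hc.fderiv_apply ℝ h).comp_homeomorph (Homeomorph.subRight (x + s • h)))).neg
  set K := closedBall x (R + (|t| + 1) * ‖h‖) with hK
  have key := (hasDerivAt_integral_of_dominated_loc_of_deriv_le (μ := volume)
    (F := fun (s : ℝ) z => f z * η (z - (x + s • h)))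
    (F' := fun (s : ℝ) z => f z * -(fderiv ℝ η (z - (x + s • h)) h))
    (bound := K.indicator fun z => ‖f z‖ * (C * ‖h‖))
    (ball_mem_nhds t one_pos) (Eventually.of_forall fun s => (I1 s).aestronglyMeasurable)
    (I1 t) (I2 t).aestronglyMeasurable ?_ ?_ ?_).2
  · have := aux_weak hf hg hw _ (trans_s t) (trans_c t) h
    simp_rw [trans_d] at this
    simp_rw [mul_neg] at key
    rw [integral_neg, this, neg_neg] at key
    exact key
  · refine Eventually.of_forall fun z s hs => ?_
    by_cases hz : z ∈ K
    · rw [indicator_of_mem hz, norm_mul, norm_neg]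
      gcongr
      exact ((fderiv ℝ η _).le_opNorm h).trans (by gcongr; exact hC _)
    · rw [indicator_of_notMem hz]
      have : fderiv ℝ η (z - (x + s • h)) = 0 := by
        by_contra hne
        have h1 : z - (x + s • h) ∈ tsupport η := support_fderiv_subset ℝ hne
        have h2 := hR h1
        rw [mem_closedBall_zero_iff] at h2
        apply hz
        rw [hK, mem_closedBall, dist_eq_norm]
        have h3 : |s| ≤ |t| + 1 := by
          rw [mem_ball, Real.dist_eq] at hs
          have := abs_sub_abs_le_abs_sub s t
          linarith
        calc ‖z - x‖ = ‖(z - (x + s • h)) + s • h‖ := by congr 1; abel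
          _ ≤ ‖z - (x + s • h)‖ + ‖s • h‖ := norm_add_le _ _
          _ ≤ R + (|t| + 1) * ‖h‖ := by
            rw [norm_smul, Real.norm_eq_abs]; gcongr
      simp [this]
  · rw [integrable_indicator_iff measurableSet_closedBall]
    exact ((hf.integrableOn_isCompact (isCompact_closedBall _ _)).norm).mul_const _
  · refine Eventually.of_forall fun z s _ => ?_
    refine HasDerivAt.const_mul _ ?_
    have h1 : HasFDerivAt η (fderiv ℝ η (z - (x + s • h))) (z - (x + s • h)) :=
      (hη.differentiable (by simp) _).hasFDerivAt
    have h2 : HasDerivAt (fun s : ℝ => z - (x + s • h)) (-h) s := by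
      have := (((hasDerivAt_id s).smul_const h).const_add x).const_sub z
      simpa using this
    have := h1.comp_hasDerivAt s h2
    rw [map_neg] at this
    exact this

theorem aux_bump {n : ℕ} {f : Euc n → ℝ} {g : Euc n → Euc n}
    (hf : LocallyIntegrable f volume) (hg : LocallyIntegrable g volume)
    (hw : IsWeakGradient f g) (φ : ContDiffBump (0 : Euc n)) (x y : Euc n)
    (hr : φ.rOut = dist x y) :
    |(∫ z, f z * φ (z - y)) - ∫ z, f z * φ (z - x)| ≤
      dist x y * ∫ z in ball x (2 * dist x y), ‖g z‖ := by
  have hxy : ‖y - x‖ = dist x y := by rw [dist_comm, dist_eq_norm]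
  have key := norm_image_sub_le_of_norm_deriv_le_segment_01'
    (f := fun t : ℝ => ∫ z, f z * φ (z - (x + t • (y - x))))
    (f' := fun t => ∫ z, φ (z - (x + t • (y - x))) * inner ℝ (g z) (y - x))
    (C := dist x y * ∫ z in ball x (2 * dist x y), ‖g z‖)
    (fun t _ => (aux_deriv hf hg hw φ φ.contDiff φ.hasCompactSupport x (y - x) t).hasDerivWithinAt)
    ?_
  · simpa using key
  intro t ht
  rw [← integral_const_mul, ← integral_indicator measurableSet_ball]
  refine norm_integral_le_of_norm_le ?_ (Eventually.of_forall fun z => ?_)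
  · rw [integrable_indicator_iff measurableSet_ball]
    exact (((hg.integrableOn_isCompact (isCompact_closedBall _ _)).mono_set
      ball_subset_closedBall).norm).const_mul _
  · by_cases hz : z ∈ ball x (2 * dist x y)
    · rw [indicator_of_mem hz, norm_mul, Real.norm_of_nonneg φ.nonneg]
      calc φ _ * ‖(inner ℝ (g z) (y - x) : ℝ)‖ ≤ 1 * (‖g z‖ * ‖y - x‖) := by
            gcongr
            · exact φ.le_one
            · exact norm_inner_le_norm _ _
        _ = dist x y * ‖g z‖ := by rw [hxy]; ring
    · rw [indicator_of_notMem hz]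
      have : φ (z - (x + t • (y - x))) = 0 := by
        apply φ.zero_of_le_dist
        rw [hr, dist_zero_right]
        rw [mem_ball, not_lt, dist_eq_norm z x] at hz
        have h1 : ‖z - x‖ ≤ ‖z - (x + t • (y - x))‖ + ‖t • (y - x)‖ := by
          refine le_trans (le_of_eq ?_) (norm_add_le _ _)
          congr 1; abel
        have h2 : ‖t • (y - x)‖ ≤ dist x y := by
          rw [norm_smul, hxy, Real.norm_of_nonneg ht.1]
          exact mul_le_of_le_one_left dist_nonneg ht.2.le
        linarith
      simp [this]

theorem aux_lim {n : ℕ} {f : Euc n → ℝ} (hf : LocallyIntegrable f volume) (r : ℝ)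
    (φ : ℕ → ContDiffBump (0 : Euc n)) (h1 : ∀ k, (φ k).rOut = r)
    (h2 : Tendsto (fun k => (φ k).rIn) atTop (𝓝 r)) (c : Euc n) :
    Tendsto (fun k => ∫ z, f z * φ k (z - c)) atTop (𝓝 (∫ z in ball c r, f z)) := by
  rw [← integral_indicator measurableSet_ball]
  refine tendsto_integral_of_dominated_convergence ((ball c r).indicator fun z => ‖f z‖)
    (fun k => ?_) ?_ (fun k => Eventually.of_forall fun z => ?_) (Eventually.of_forall fun z => ?_)
  · have : Continuous fun z => φ k (z - c) := (φ k).continuous.comp (continuous_id.sub continuous_const)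
    exact hf.aestronglyMeasurable.mul this.aestronglyMeasurable
  · rw [integrable_indicator_iff measurableSet_ball]
    exact ((hf.integrableOn_isCompact (isCompact_closedBall _ _)).mono_set
      ball_subset_closedBall).norm
  · by_cases hz : z ∈ ball c r
    · rw [indicator_of_mem hz, norm_mul, Real.norm_of_nonneg (φ k).nonneg]
      exact mul_le_of_le_one_right (norm_nonneg _) (φ k).le_one
    · rw [indicator_of_notMem hz, (φ k).zero_of_le_dist]
      · simp
      · rw [mem_ball, not_lt, dist_eq_norm] at hz
        rw [h1, dist_zero_right]; exact hz
  · by_cases hz : z ∈ ball c r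
    · rw [indicator_of_mem hz]
      rw [mem_ball, dist_eq_norm] at hz
      refine tendsto_const_nhds.congr' ?_
      filter_upwards [h2.eventually_const_lt hz] with k hk
      rw [(φ k).one_of_mem_closedBall, mul_one]
      rw [mem_closedBall, dist_zero_right]; exact hk.le
    · rw [indicator_of_notMem hz]
      refine tendsto_const_nhds.congr fun k => ?_
      rw [mem_ball, not_lt, dist_eq_norm] at hz
      rw [(φ k).zero_of_le_dist, mul_zero]
      rw [h1, dist_zero_right]; exact hz

/-- comparison of averages over balls of equal radius centered at two
points whose distance equals the radius. -/
theorem abs_average_sub_average_diff_centers_le {n : ℕ} :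
    ∃ C : ℝ, 0 < C ∧
      ∀ (p : ℝ≥0∞), 1 ≤ p →
      ∀ (f : Euc n → ℝ) (g : Euc n → Euc n),
        MemLp f p volume → MemLp g p volume → IsWeakGradient f g →
      ∀ α : ℝ, 0 < α →
      ∀ x y : Euc n, x ≠ y →
        maxFn (fun z => ENNReal.ofReal ‖g z‖) x ≤ ENNReal.ofReal α →
        maxFn (fun z => ENNReal.ofReal ‖g z‖) y ≤ ENNReal.ofReal α →
        |(⨍ z in ball x (dist x y), f z) - ⨍ z in ball y (dist x y), f z| ≤
          C * dist x y * α := by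
  refine ⟨2 ^ n, by positivity, ?_⟩
  intro p hp f g hf hg hw α hα x y hxy hx _
  have hf := hf.locallyIntegrable hp
  have hg := hg.locallyIntegrable hp
  have hr : 0 < dist x y := dist_pos.2 hxy
  have : Nontrivial (Euc n) := ⟨x, y, hxy⟩
  let φ : ℕ → ContDiffBump (0 : Euc n) := fun k =>
    { rIn := dist x y * (1 - 1 / ((k : ℝ) + 2))
      rOut := dist x y
      rIn_pos := by
        apply mul_pos hr
        rw [sub_pos, div_lt_one (by positivity)]
        have : (0 : ℝ) ≤ k := k.cast_nonneg
        linarith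
      rIn_lt_rOut := by
        apply mul_lt_of_lt_one_right hr
        have : (0 : ℝ) < 1 / ((k : ℝ) + 2) := by positivity
        linarith }
  have hφ : Tendsto (fun k => (φ k).rIn) atTop (𝓝 (dist x y)) := by
    have h1 : Tendsto (fun k : ℕ => 1 / ((k : ℝ) + 2)) atTop (𝓝 0) := by
      simp_rw [one_div]
      exact tendsto_inv_atTop_zero.comp
        (tendsto_atTop_add_const_right _ _ tendsto_natCast_atTop_atTop)
    have := (h1.const_sub 1).const_mul (dist x y)
    rw [sub_zero, mul_one] at this
    exact this
  have L := fun c => aux_lim hf (dist x y) φ (fun _ => rfl) hφ c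
  have B := le_of_tendsto ((L y).sub (L x)).abs
    (Eventually.of_forall fun k => aux_bump hf hg hw (φ k) x y rfl)
  have G : ∫ z in ball x (2 * dist x y), ‖g z‖ ≤ α * volume.real (ball x (2 * dist x y)) := by
    have h2 : 0 < 2 * dist x y := by positivity
    have h3 : (volume (ball x (2 * dist x y)))⁻¹ *
        ∫⁻ z in ball x (2 * dist x y), ENNReal.ofReal ‖g z‖ ≤ ENNReal.ofReal α :=
      le_trans (le_iSup₂ (f := fun (r : ℝ) (_ : 0 < r) => (volume (ball x r))⁻¹ *
        ∫⁻ z in ball x r, ENNReal.ofReal ‖g z‖) _ h2) hx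
    have hv0 : volume (ball x (2 * dist x y)) ≠ 0 := (measure_ball_pos _ _ h2).ne'
    have hv1 : volume (ball x (2 * dist x y)) ≠ ∞ := measure_ball_lt_top.ne
    rw [mul_comm, ← div_eq_mul_inv, ENNReal.div_le_iff hv0 hv1] at h3
    rw [integral_eq_lintegral_of_nonneg_ae (Eventually.of_forall fun _ => norm_nonneg _)
      hg.aestronglyMeasurable.norm.restrict]
    refine (ENNReal.toReal_mono (ENNReal.mul_ne_top ENNReal.ofReal_ne_top hv1) h3).trans_eq ?_
    rw [ENNReal.toReal_mul, ENNReal.toReal_ofReal hα.le]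
    rfl
  have V : ∀ (c : Euc n) (s : ℝ), 0 ≤ s →
      volume.real (ball c s) = s ^ n * volume.real (ball (0 : Euc n) 1) := by
    intro c s hs
    rw [Measure.real, Measure.addHaar_ball _ _ hs, ENNReal.toReal_mul,
      ENNReal.toReal_ofReal (by positivity)]
    simp [Measure.real]
  have v0 : 0 < volume.real (ball (0 : Euc n) 1) :=
    ENNReal.toReal_pos (measure_ball_pos _ _ one_pos).ne' measure_ball_lt_top.ne
  rw [setAverage_eq, setAverage_eq, V x _ hr.le, V y _ hr.le, ← smul_sub, smul_eq_mul, abs_mul,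
    abs_sub_comm, abs_of_pos (by positivity), inv_mul_le_iff₀ (by positivity)]
  rw [V x _ (by positivity)] at G
  refine (B.trans (mul_le_mul_of_nonneg_left G hr.le)).trans_eq ?_
  rw [mul_pow]; ring
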